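/- The function H : ℝ → ℝ² given by H(t) = (t, −t³/3) is pseudo-convex, although its second component h₂(t) = −t³/3 is not a pseudo-convex real function. -/

import Mathlib

noncomputable section

/-- The components of the vector function `H(t) = (t, -t³/3)`. -/
def Hcomp : Fin 2 → ℝ → ℝ := ![fun t => t, fun t => -t ^ 3 / 3]

/-- A differentiable vector function `h : Fin m → ℝ → ℝ` of one real variable is
pseudo-convex if `JH(x)(y - x) ⊀ 0` implies `H(y) ⊀ H(x)`; here the Jacobian row `i`
applied to `y - x` is `deriv (h i) x * (y - x)`. -/
def PseudoConvexOnReal {m : ℕ} (h : Fin m → ℝ → ℝ) : Prop :=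
  (∀ i, Differentiable ℝ (h i)) ∧
    ∀ x y : ℝ, ¬ (∀ i, deriv (h i) x * (y - x) < 0) → ¬ (∀ i, h i y < h i x)

theorem stmt_16 :
    PseudoConvexOnReal Hcomp ∧
      ¬ (Differentiable ℝ (fun t : ℝ => -t ^ 3 / 3) ∧
          ∀ x y : ℝ, 0 ≤ deriv (fun t : ℝ => -t ^ 3 / 3) x * (y - x) →
            -x ^ 3 / 3 ≤ -y ^ 3 / 3) := by
  have hd : Differentiable ℝ (fun t : ℝ => -t ^ 3 / 3) := by fun_prop
  refine ⟨⟨?_, ?_⟩, ?_⟩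
  · intro i
    fin_cases i
    · exact differentiable_id
    · exact hd
  · intro x y _ h
    have h0 : y < x := h 0
    have h1 : -y ^ 3 / 3 < -x ^ 3 / 3 := h 1
    have h2 : y ^ 3 < x ^ 3 := (Odd.strictMono_pow (by decide : Odd 3)) h0
    linarith
  · rintro ⟨_, h⟩
    have hz : deriv (fun t : ℝ => -t ^ 3 / 3) 0 = 0 := by
      have := (((hasDerivAt_id (0 : ℝ)).pow 3).neg.div_const 3).deriv
      simpa using this
    have := h 0 1 (by rw [hz]; norm_num)
    norm_num at this
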